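/- arXiv:2107.01613 — 4 statements merged into one kernel-verified Lean document; each statement's English description precedes it below -/
import Mathlib

section
/- For every instance (m, R, J, p, r) with J nonempty there exists a feasible schedule of J whose makespan is at most p(J)/m + 2·area(J)/R + p_max. Consequently, the optimal makespan is at most 4·max{p_max, area(J)/R, p(J)/m}. -/
/-- The set of jobs of `J` active at time `t` under schedule `σ` with processing times `p`. -/
def activeSet {ι : Type*} (J : Finset ι) (σ p : ι → ℚ) (t : ℚ) : Finset ι :=
  J.filter (fun j => σ j ≤ t ∧ t < σ j + p j)

/-- A schedule is feasible if at every time at most `m` jobs are active and the active jobs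
use at most `R` resources in total. -/
def Feasible {ι : Type*} (m R : ℕ) (J : Finset ι) (σ p : ι → ℚ) (r : ι → ℕ) : Prop :=
  ∀ t : ℚ, (activeSet J σ p t).card ≤ m ∧ ∑ j ∈ activeSet J σ p t, r j ≤ R

/-!
Give job `j` the weight `1 / m + 2 * r j / R` and start the jobs in order of non-increasing resource
requirement, maintaining that the weighted work done by the current time `t` is at least `t`. As
long as the next job does not fit, the active jobs have total weight at least `1`: either all `m`
machines are busy, or some active job requires at least as much as the next one, so that the active
jobs use more than `R / 2`. Waiting for the next completion therefore preserves the invariant. Hence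
the last start time is at most the weighted work of all jobs, `p(J) / m + 2 * area(J) / R`.
-/

section

variable {ι : Type*} {m R : ℕ} {S : Finset ι} {σ τ p w : ι → ℚ} {r : ι → ℕ} {a : ι} {t u T : ℚ}

theorem mem_activeSet {i : ι} :
    i ∈ activeSet S σ p t ↔ i ∈ S ∧ σ i ≤ t ∧ t < σ i + p i :=
  Finset.mem_filter

theorem activeSet_subset : activeSet S σ p t ⊆ S :=
  Finset.filter_subset _ _

theorem activeSet_congr (h : ∀ i ∈ S, σ i = τ i) : activeSet S σ p t = activeSet S τ p t :=
  Finset.filter_congr fun i hi => by rw [h i hi]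

theorem activeSet_subset_of_start_le (hσ : ∀ i ∈ S, σ i ≤ t) (htu : t ≤ u) :
    activeSet S σ p u ⊆ activeSet S σ p t := fun i hi => by
  obtain ⟨hiS, -, hiu⟩ := mem_activeSet.1 hi
  exact mem_activeSet.2 ⟨hiS, hσ i hiS, htu.trans_lt hiu⟩

theorem activeSet_insert_subset [DecidableEq ι] :
    activeSet (insert a S) σ p t ⊆ insert a (activeSet S σ p t) := by
  rw [activeSet, Finset.filter_insert]
  split_ifs
  · rfl
  · exact Finset.subset_insert _ _

theorem activeSet_insert_of_lt [DecidableEq ι] (ht : t < σ a) :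
    activeSet (insert a S) σ p t = activeSet S σ p t := by
  rw [activeSet, Finset.filter_insert, if_neg fun h => ht.not_ge h.1, activeSet]

namespace Feasible

theorem congr (h : Feasible m R S σ p r) (hστ : ∀ i ∈ S, σ i = τ i) : Feasible m R S τ p r :=
  fun t => activeSet_congr hστ ▸ h t

theorem insert [DecidableEq ι] (h : Feasible m R S σ p r) (haS : a ∉ S)
    (hσ : ∀ i ∈ S, σ i ≤ σ a) (hcard : (activeSet S σ p (σ a)).card < m)
    (hres : ∑ i ∈ activeSet S σ p (σ a), r i + r a ≤ R) :
    Feasible m R (insert a S) σ p r := fun t => by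
  rcases lt_or_ge t (σ a) with ht | ht
  · rw [activeSet_insert_of_lt ht]
    exact h t
  have hsub : activeSet (Insert.insert a S) σ p t ⊆ Insert.insert a (activeSet S σ p (σ a)) :=
    activeSet_insert_subset.trans
      (Finset.insert_subset_insert a (activeSet_subset_of_start_le hσ ht))
  have ha : a ∉ activeSet S σ p (σ a) := fun ha => haS (activeSet_subset ha)
  constructor
  · calc _ ≤ _ := Finset.card_le_card hsub
      _ = (activeSet S σ p (σ a)).card + 1 := Finset.card_insert_of_notMem ha
      _ ≤ m := hcard
  · calc _ ≤ _ := Finset.sum_le_sum_of_subset hsub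
      _ = ∑ i ∈ activeSet S σ p (σ a), r i + r a := by rw [Finset.sum_insert ha, add_comm]
      _ ≤ R := hres

end Feasible

/-- The `w`-weighted processing time that the jobs of `S` receive before time `t`. The second
minimum makes the contribution of a job that starts after `t` equal to `0` when `0 ≤ p i`. -/
def workDone (S : Finset ι) (σ p w : ι → ℚ) (t : ℚ) : ℚ :=
  ∑ i ∈ S, w i * (min t (σ i + p i) - min t (σ i))

theorem workDone_congr (h : ∀ i ∈ S, σ i = τ i) : workDone S σ p w t = workDone S τ p w t :=
  Finset.sum_congr rfl fun i hi => by rw [h i hi]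

theorem workDone_insert_start [DecidableEq ι] (haS : a ∉ S) (hpa : 0 ≤ p a) :
    workDone (insert a S) σ p w (σ a) = workDone S σ p w (σ a) := by
  simp [workDone, Finset.sum_insert haS, hpa]

theorem workDone_le_sum_mul (hp : ∀ i ∈ S, 0 ≤ p i) (hw : ∀ i ∈ S, 0 ≤ w i) :
    workDone S σ p w t ≤ ∑ i ∈ S, w i * p i := by
  refine Finset.sum_le_sum fun i hi => mul_le_mul_of_nonneg_left ?_ (hw i hi)
  have := hp i hi
  grind

theorem workDone_add_mul_le (hp : ∀ i ∈ S, 0 ≤ p i) (hw : ∀ i ∈ S, 0 ≤ w i) (htu : t ≤ u)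
    (hu : ∀ i ∈ activeSet S σ p t, u ≤ σ i + p i) :
    workDone S σ p w t + (∑ i ∈ activeSet S σ p t, w i) * (u - t) ≤ workDone S σ p w u := by
  have hsum : (∑ i ∈ activeSet S σ p t, w i) * (u - t) =
      ∑ i ∈ S, w i * if σ i ≤ t ∧ t < σ i + p i then u - t else 0 := by
    simp only [activeSet, Finset.sum_mul, Finset.sum_filter, ite_mul, mul_ite, zero_mul, mul_zero]
  rw [hsum, workDone, workDone, ← Finset.sum_add_distrib]
  refine Finset.sum_le_sum fun i hi => ?_
  rw [← mul_add]
  refine mul_le_mul_of_nonneg_left ?_ (hw i hi)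
  have hpi := hp i hi
  split_ifs with hact
  · have := hu i (mem_activeSet.2 ⟨hi, hact⟩)
    grind
  · grind

theorem exists_gt_le_workDone (hp : ∀ i ∈ S, 0 ≤ p i) (hw : ∀ i ∈ S, 0 ≤ w i)
    (ht : t ≤ workDone S σ p w t) (hact : 1 ≤ ∑ i ∈ activeSet S σ p t, w i) :
    ∃ k ∈ S, t < σ k + p k ∧ σ k + p k ≤ workDone S σ p w (σ k + p k) := by
  have hne : (activeSet S σ p t).Nonempty :=
    Finset.nonempty_of_sum_ne_zero (zero_lt_one.trans_le hact).ne'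
  obtain ⟨k, hk, hkmin⟩ := Finset.exists_min_image _ (fun i => σ i + p i) hne
  obtain ⟨hkS, -, htk⟩ := mem_activeSet.1 hk
  refine ⟨k, hkS, htk, ?_⟩
  calc σ k + p k = t + 1 * (σ k + p k - t) := by ring
    _ ≤ workDone S σ p w t + (∑ i ∈ activeSet S σ p t, w i) * (σ k + p k - t) := by
      gcongr
    _ ≤ _ := workDone_add_mul_le hp hw htk.le hkmin

theorem exists_le_workDone_of_forall_or {P : ℚ → Prop} (hp : ∀ i ∈ S, 0 ≤ p i)
    (hw : ∀ i ∈ S, 0 ≤ w i) (hT : T ≤ workDone S σ p w T)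
    (hP : ∀ t, T ≤ t → P t ∨ 1 ≤ ∑ i ∈ activeSet S σ p t, w i) :
    ∃ t, T ≤ t ∧ t ≤ workDone S σ p w t ∧ P t := by
  -- Among `T` and the later completion times, take the last one `t` with `t ≤ workDone S σ p w t`.
  -- If `P t` failed, the next completion time would also satisfy this inequality.
  let C := (insert T (S.image fun i => σ i + p i)).filter fun t => T ≤ t ∧ t ≤ workDone S σ p w t
  have hC : C.Nonempty := ⟨T, by simp [C, hT]⟩
  obtain ⟨t, htC, htmax⟩ := C.exists_max_image id hC
  obtain ⟨-, hTt, ht⟩ := Finset.mem_filter.1 htC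
  refine ⟨t, hTt, ht, (hP t hTt).resolve_right fun hact => ?_⟩
  obtain ⟨k, hkS, htk, hk⟩ := exists_gt_le_workDone hp hw ht hact
  have hkC : σ k + p k ∈ C := Finset.mem_filter.2
    ⟨Finset.mem_insert_of_mem (Finset.mem_image_of_mem _ hkS), hTt.trans htk.le, hk⟩
  exact (htmax _ hkC).not_gt htk

/-- The weight of a job per unit of processing time: the fraction of the `m` machines that it
occupies plus twice the fraction of the resource capacity `R` that it uses. -/
def jobWeight (m R : ℕ) (r : ι → ℕ) (i : ι) : ℚ :=
  1 / m + 2 * r i / R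

theorem jobWeight_nonneg (i : ι) : 0 ≤ jobWeight m R r i := by
  unfold jobWeight
  positivity

theorem sum_jobWeight_mul (f : ι → ℚ) :
    ∑ i ∈ S, jobWeight m R r i * f i = (∑ i ∈ S, f i) / m + 2 * (∑ i ∈ S, r i * f i) / R := by
  simp only [jobWeight, Finset.mul_sum, Finset.sum_div, ← Finset.sum_add_distrib]
  exact Finset.sum_congr rfl fun i _ => by ring

theorem sum_jobWeight :
    ∑ i ∈ S, jobWeight m R r i = S.card / m + 2 * (∑ i ∈ S, r i : ℕ) / R := by
  simpa using sum_jobWeight_mul (m := m) (R := R) (r := r) (S := S) 1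

theorem fits_or_one_le_sum_jobWeight (hm : 0 < m) (hR : 0 < R) {q : ℕ} (hqR : q ≤ R)
    (hq : ∀ i ∈ S, q ≤ r i) :
    (S.card < m ∧ ∑ i ∈ S, r i + q ≤ R) ∨ 1 ≤ ∑ i ∈ S, jobWeight m R r i := by
  rw [sum_jobWeight]
  rcases le_or_gt m S.card with hcard | hcard
  · have hmachines : (1 : ℚ) ≤ S.card / m := by
      rw [one_le_div (by positivity)]
      exact_mod_cast hcard
    exact .inr (le_add_of_le_of_nonneg hmachines (by positivity))
  rcases le_or_gt (∑ i ∈ S, r i + q) R with hres | hres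
  · exact .inl ⟨hcard, hres⟩
  have hne : S.Nonempty := Finset.nonempty_iff_ne_empty.2 fun hS => by
    simp only [hS, Finset.sum_empty] at hres
    omega
  obtain ⟨i, hi⟩ := hne
  have hqsum : q ≤ ∑ i ∈ S, r i :=
    (hq i hi).trans (Finset.single_le_sum (fun _ _ => Nat.zero_le _) hi)
  have hresource : (1 : ℚ) ≤ 2 * (∑ i ∈ S, r i : ℕ) / R := by
    rw [one_le_div (by positivity)]
    exact_mod_cast (show R ≤ 2 * ∑ i ∈ S, r i by omega)
  exact .inr (le_add_of_nonneg_of_le (by positivity) hresource)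

/-- `σ` is a feasible schedule of `S` whose jobs have all started by time `T` and whose weighted
work done before `T` is at least `T`. This is the invariant of the greedy algorithm. -/
structure IsBusySchedule (m R : ℕ) (S : Finset ι) (σ p : ι → ℚ) (r : ι → ℕ) (T : ℚ) :
    Prop where
  time_nonneg : 0 ≤ T
  start_nonneg : ∀ i ∈ S, 0 ≤ σ i
  start_le : ∀ i ∈ S, σ i ≤ T
  feasible : Feasible m R S σ p r
  le_workDone : T ≤ workDone S σ p (jobWeight m R r) T

namespace IsBusySchedule

theorem empty : IsBusySchedule m R ∅ σ p r 0 where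
  time_nonneg := le_rfl
  start_nonneg := by simp
  start_le := by simp
  feasible t := by simp [activeSet]
  le_workDone := by simp [workDone]

theorem congr (h : IsBusySchedule m R S σ p r T) (hστ : ∀ i ∈ S, σ i = τ i) :
    IsBusySchedule m R S τ p r T where
  time_nonneg := h.time_nonneg
  start_nonneg i hi := hστ i hi ▸ h.start_nonneg i hi
  start_le i hi := hστ i hi ▸ h.start_le i hi
  feasible := h.feasible.congr hστ
  le_workDone := workDone_congr hστ ▸ h.le_workDone

theorem insert [DecidableEq ι] (h : IsBusySchedule m R S σ p r (σ a)) (haS : a ∉ S)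
    (hpa : 0 ≤ p a) (hcard : (activeSet S σ p (σ a)).card < m)
    (hres : ∑ i ∈ activeSet S σ p (σ a), r i + r a ≤ R) :
    IsBusySchedule m R (insert a S) σ p r (σ a) where
  time_nonneg := h.time_nonneg
  start_nonneg := Finset.forall_mem_insert .. |>.2 ⟨h.time_nonneg, h.start_nonneg⟩
  start_le := Finset.forall_mem_insert .. |>.2 ⟨le_rfl, h.start_le⟩
  feasible := h.feasible.insert haS h.start_le hcard hres
  le_workDone := (workDone_insert_start haS hpa).symm ▸ h.le_workDone

theorem exists_fits (h : IsBusySchedule m R S σ p r T) (hm : 0 < m) (hR : 0 < R)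
    (hp : ∀ i ∈ S, 0 ≤ p i) {q : ℕ} (hqR : q ≤ R) (hq : ∀ i ∈ S, q ≤ r i) :
    ∃ t, IsBusySchedule m R S σ p r t ∧
      (activeSet S σ p t).card < m ∧ ∑ i ∈ activeSet S σ p t, r i + q ≤ R := by
  obtain ⟨t, hTt, ht, hfits⟩ := exists_le_workDone_of_forall_or hp (fun i _ => jobWeight_nonneg i)
    h.le_workDone fun _ _ =>
      fits_or_one_le_sum_jobWeight hm hR hqR fun i hi => hq i (activeSet_subset hi)
  exact ⟨t, ⟨h.time_nonneg.trans hTt, h.start_nonneg,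
    fun i hi => (h.start_le i hi).trans hTt, h.feasible, ht⟩, hfits⟩

theorem start_le_bound (h : IsBusySchedule m R S σ p r T) (hp : ∀ i ∈ S, 0 ≤ p i) {i : ι}
    (hi : i ∈ S) : σ i ≤ (∑ j ∈ S, p j) / m + 2 * (∑ j ∈ S, (r j : ℚ) * p j) / R :=
  calc σ i ≤ T := h.start_le i hi
    _ ≤ workDone S σ p (jobWeight m R r) T := h.le_workDone
    _ ≤ ∑ j ∈ S, jobWeight m R r j * p j := workDone_le_sum_mul hp fun j _ => jobWeight_nonneg j
    _ = _ := sum_jobWeight_mul p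

end IsBusySchedule

theorem exists_isBusySchedule (hm : 0 < m) (hR : 0 < R) (hp : ∀ i ∈ S, 0 ≤ p i)
    (hr : ∀ i ∈ S, r i ≤ R) : ∃ σ T, IsBusySchedule m R S σ p r T := by
  classical
  induction S using Finset.induction_on_min_value r with
  | empty => exact ⟨0, 0, .empty⟩
  | insert a S haS hmin ih =>
    rw [Finset.forall_mem_insert] at hp hr
    obtain ⟨σ, T, hσ⟩ := ih hp.2 hr.2
    obtain ⟨t, ht, hcard, hres⟩ := hσ.exists_fits hm hR hp.2 hr.1 hmin
    obtain ⟨τ, hστ, rfl⟩ : ∃ τ : ι → ℚ, (∀ i ∈ S, σ i = τ i) ∧ τ a = t :=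
      ⟨Function.update σ a t,
        fun i hi => (Function.update_of_ne (ne_of_mem_of_not_mem hi haS) _ _).symm,
        Function.update_self ..⟩
    rw [activeSet_congr hστ] at hcard hres
    exact ⟨τ, τ a, (ht.congr hστ).insert haS hp.1 hcard hres⟩

theorem add_two_mul_add_le_four_mul_max {K : Type*} [CommRing K] [LinearOrder K]
    [IsStrictOrderedRing K] (x y z : K) :
    x + 2 * y + z ≤ 4 * max z (max y x) := by
  grind

end

/-- the greedy list schedule guarantee.  There is a feasible schedule with
makespan at most `p(J)/m + 2·area(J)/R + p_max`; consequently the optimal makespan is at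
most `4·max{p_max, area(J)/R, p(J)/m}`. -/
theorem greedy_list_schedule {ι : Type*} (m R : ℕ) (J : Finset ι)
    (p : ι → ℚ) (r : ι → ℕ)
    (hm : 1 ≤ m) (hR : 1 ≤ R) (hJ : J.Nonempty)
    (hp : ∀ j ∈ J, 0 < p j) (hr : ∀ j ∈ J, r j ≤ R) :
    ∃ σ : ι → ℚ, (∀ j ∈ J, 0 ≤ σ j) ∧ Feasible m R J σ p r ∧
      J.sup' hJ (fun j => σ j + p j) ≤
        (∑ j ∈ J, p j) / m + 2 * (∑ j ∈ J, (r j : ℚ) * p j) / R + J.sup' hJ p ∧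
      J.sup' hJ (fun j => σ j + p j) ≤
        4 * max (J.sup' hJ p)
          (max ((∑ j ∈ J, (r j : ℚ) * p j) / R) ((∑ j ∈ J, p j) / m)) := by
  have hp₀ : ∀ j ∈ J, 0 ≤ p j := fun j hj => (hp j hj).le
  obtain ⟨σ, T, hσ⟩ := exists_isBusySchedule hm hR hp₀ hr
  have hmakespan : J.sup' hJ (fun j => σ j + p j) ≤
      (∑ j ∈ J, p j) / m + 2 * (∑ j ∈ J, (r j : ℚ) * p j) / R + J.sup' hJ p :=
    Finset.sup'_le _ _ fun j hj => add_le_add (hσ.start_le_bound hp₀ hj) (Finset.le_sup' p hj)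
  refine ⟨σ, hσ.start_nonneg, hσ.feasible, hmakespan, hmakespan.trans ?_⟩
  rw [mul_div_assoc]
  exact add_two_mul_add_le_four_mul_max _ _ _
end

section
/- Let (m, R, J, p, r) be an instance, T ∈ ℚ with T > 0, and ε ∈ (0,1] with 1/ε ∈ ℕ. For i ∈ ℕ let γ_i = ε^{1+4i} (so γ_0 = ε and γ_{i+1} = γ_i·ε^4), and for i ∈ {1, …, 1/ε} let J_{γ_i} = {j ∈ J : γ_i·T ≤ p(j) < γ_{i−1}·T}. Then there exists i ∈ {1, …, 1/ε} such that p(J_{γ_i})/m + 2·area(J_{γ_i})/R ≤ ε·(p(J)/m + 2·area(J)/R). -/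
/-!
The layers are cut out by disjoint intervals of processing times, so they are pairwise disjoint
sets of jobs. The load `p(S)/m + 2·area(S)/R` is additive in `S`, with nonnegative weights, so the
loads of `N` layers add up to at most the load of `J`, and some layer has at most the average.
-/

open Finset

section Pigeonhole

variable {ι κ : Type*} {s : Finset ι} {I : Finset κ} {t : κ → Finset ι}

theorem sum_sum_le_sum_of_pairwiseDisjoint {M : Type*} [AddCommMonoid M] [PartialOrder M]
    [IsOrderedAddMonoid M] {w : ι → M} (hw : ∀ j ∈ s, 0 ≤ w j)
    (ht : (I : Set κ).PairwiseDisjoint t) (hts : ∀ i ∈ I, t i ⊆ s) :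
    ∑ i ∈ I, ∑ j ∈ t i, w j ≤ ∑ j ∈ s, w j := by
  classical
  rw [← sum_biUnion ht]
  exact sum_le_sum_of_subset_of_nonneg (biUnion_subset.2 hts) fun j hj _ => hw j hj

theorem exists_sum_le_sum_div_card_of_pairwiseDisjoint {K : Type*} [Semifield K]
    [LinearOrder K] [IsStrictOrderedRing K] {w : ι → K} (hI : I.Nonempty)
    (hw : ∀ j ∈ s, 0 ≤ w j) (ht : (I : Set κ).PairwiseDisjoint t) (hts : ∀ i ∈ I, t i ⊆ s) :
    ∃ i ∈ I, ∑ j ∈ t i, w j ≤ (∑ j ∈ s, w j) / #I := by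
  have hcard : (#I : K) ≠ 0 := Nat.cast_ne_zero.2 hI.card_ne_zero
  refine exists_le_of_sum_le hI ?_
  calc ∑ i ∈ I, ∑ j ∈ t i, w j
      ≤ ∑ j ∈ s, w j := sum_sum_le_sum_of_pairwiseDisjoint hw ht hts
    _ = ∑ _i ∈ I, (∑ j ∈ s, w j) / #I := by
      rw [sum_const, nsmul_eq_mul, mul_div_cancel₀ _ hcard]

end Pigeonhole

section SizeLayer

variable {ι α : Type*} [Preorder α] [DecidableLE α] [DecidableLT α]

/-- The jobs of `J` whose size lies between two consecutive thresholds, in `[γ (i + 1), γ i)`.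
The thresholds absorb the factor `T`, and the index is shifted to avoid subtraction: for
`γ i = ε ^ (4 * i + 1) * T`, `sizeLayer γ J p i` is the paper's `J_{γ_{i+1}}`. -/
def sizeLayer (γ : ℕ → α) (J : Finset ι) (p : ι → α) (i : ℕ) : Finset ι :=
  {j ∈ J | γ (i + 1) ≤ p j ∧ p j < γ i}

theorem sizeLayer_subset (γ : ℕ → α) (J : Finset ι) (p : ι → α) (i : ℕ) :
    sizeLayer γ J p i ⊆ J :=
  filter_subset _ _

theorem pairwise_disjoint_sizeLayer {γ : ℕ → α} (hγ : Antitone γ) (J : Finset ι) (p : ι → α) :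
    Pairwise (Function.onFun Disjoint (sizeLayer γ J p)) := fun _ _ hik =>
  disjoint_filter.2 fun _ _ hi hk =>
    Set.disjoint_left.1 (hγ.pairwise_disjoint_on_Ico_succ hik) hi hk

end SizeLayer

section CombinedLoad

variable {ι K : Type*} [DivisionSemiring K]

/-- The load `p(S)/m + 2·area(S)/R` that a set `S` of jobs, with processing times `p` and resource
requirements `r`, puts on `m` machines and a resource of capacity `R`. `m` and `R` should be
nonzero, as division by zero gives zero. -/
def combinedLoad (m R : K) (p r : ι → K) (S : Finset ι) : K :=
  (∑ j ∈ S, p j) / m + 2 * (∑ j ∈ S, r j * p j) / R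

theorem combinedLoad_eq_sum (m R : K) (p r : ι → K) (S : Finset ι) :
    combinedLoad m R p r S = ∑ j ∈ S, (p j / m + 2 * (r j * p j) / R) := by
  rw [combinedLoad, sum_add_distrib, sum_div, mul_sum, sum_div]

end CombinedLoad

theorem antitone_pow_linear_mul {K : Type*} [Semiring K] [PartialOrder K] [IsOrderedRing K]
    {ε T : K} (hε0 : 0 ≤ ε) (hε1 : ε ≤ 1) (hT : 0 ≤ T) (a b : ℕ) :
    Antitone fun i : ℕ => ε ^ (a * i + b) * T := fun i k hik => by
  have hexp : a * i + b ≤ a * k + b := by gcongr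
  exact mul_le_mul_of_nonneg_right (pow_le_pow_of_le_one hε0 hε1 hexp) hT

theorem exists_cheap_medium_layer_general {ι K : Type*}
    [Semifield K] [LinearOrder K] [IsStrictOrderedRing K] {m R : K} (hm : 0 < m) (hR : 0 < R)
    {J : Finset ι} {p r : ι → K} (hp : ∀ j ∈ J, 0 ≤ p j) (hr : ∀ j ∈ J, 0 ≤ r j)
    {γ : ℕ → K} (hγ : Antitone γ) {N : ℕ} (hN : 1 ≤ N) :
    ∃ i < N, combinedLoad m R p r (sizeLayer γ J p i) ≤ combinedLoad m R p r J / N := by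
  have hweight : ∀ j ∈ J, 0 ≤ p j / m + 2 * (r j * p j) / R := fun j hj => by
    have := hp j hj
    have := hr j hj
    positivity
  obtain ⟨i, hi, hle⟩ := exists_sum_le_sum_div_card_of_pairwiseDisjoint
    (nonempty_range_iff.2 (Nat.one_le_iff_ne_zero.1 hN)) hweight
    ((pairwise_disjoint_sizeLayer hγ J p).set_pairwise _) fun i _ => sizeLayer_subset γ J p i
  rw [card_range] at hle
  exact ⟨i, mem_range.1 hi, by simpa only [combinedLoad_eq_sum] using hle⟩

/-- existence of a cheap gap of medium jobs.  With `γ_i = ε^(1+4i)`,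
there is an index `i ∈ {1, …, 1/ε}` such that the jobs with processing time in
`[γ_i·T, γ_{i−1}·T)` satisfy
`p(J_{γ_i})/m + 2·area(J_{γ_i})/R ≤ ε·(p(J)/m + 2·area(J)/R)`. -/
theorem exists_cheap_medium_layer {ι : Type*} (m R : ℕ) (J : Finset ι)
    (p : ι → ℚ) (r : ι → ℕ)
    (hm : 1 ≤ m) (hR : 1 ≤ R)
    (hp : ∀ j ∈ J, 0 < p j) (hr : ∀ j ∈ J, r j ≤ R)
    (T : ℚ) (hT : 0 < T)
    (ε : ℚ) (hε0 : 0 < ε) (hε1 : ε ≤ 1)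
    (N : ℕ) (hN : 1 ≤ N) (hεN : ε = 1 / (N : ℚ)) :
    ∃ i : ℕ, 1 ≤ i ∧ i ≤ N ∧
      (∑ j ∈ J.filter (fun j => ε ^ (4 * i + 1) * T ≤ p j ∧ p j < ε ^ (4 * i - 3) * T), p j) / m
        + 2 * (∑ j ∈ J.filter
            (fun j => ε ^ (4 * i + 1) * T ≤ p j ∧ p j < ε ^ (4 * i - 3) * T),
            (r j : ℚ) * p j) / R
      ≤ ε * ((∑ j ∈ J, p j) / m + 2 * (∑ j ∈ J, (r j : ℚ) * p j) / R) := by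
  obtain ⟨i, hi, hcheap⟩ := exists_cheap_medium_layer_general (Nat.cast_pos.2 hm)
    (Nat.cast_pos.2 hR) (fun j hj => (hp j hj).le) (fun j _ => (r j).cast_nonneg)
    (antitone_pow_linear_mul hε0.le hε1 hT.le 4 1) hN
  exact ⟨i + 1, i.succ_pos, hi, hcheap.trans_eq (by rw [hεN, one_div_mul_eq_div]; rfl)⟩
end

section
/- Let ε ∈ (0,1] with 1/ε ∈ ℕ, let T ∈ ℚ with T > 0, let k ∈ ℕ, and let (m, R, J, p, r) be an instance such that for every job j ∈ J there is an integer l_j with 1 ≤ l_j ≤ k and ε^{l_j}·T ≤ p(j) < ε^{l_j−1}·T. Define the rounded processing time p'(j) = ⌈p(j)/(ε^{l_j+1}·T)⌉ · ε^{l_j+1}·T. Then: (i) for each j there is an integer k_j with 1/ε ≤ k_j ≤ 1/ε² such that p'(j) = k_j·ε^{l_j+1}·T, and p(j) ≤ p'(j); and (ii) for every feasible schedule σ of (m, R, J, p, r) with makespan M there exists a feasible schedule σ' of the rounded instance (m, R, J, p', r) with makespan at most (1+2ε)·M in which each σ'(j) is a nonnegative integer multiple of ε^{l_j+1}·T. 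-/
/-!
Stretch the schedule by the factor `c = 1 + 2ε`, so that job `j` owns the window
`[c σ(j), c (σ(j) + p(j)))`, whose length exceeds `p(j)` by `2ε p(j)`. The grid width
`u_j = ε ^ (l_j + 1) T` is at most `ε p(j)`, hence there is room both for rounding `p(j)` up and for
moving the start of `j` up to the next grid point. The shifted job stays inside its window, so the
jobs active at time `t` were already simultaneously active at time `t / c` in the original schedule.
-/

section RoundUp

variable {K : Type*} [Field K] [LinearOrder K] [FloorRing K]

/-- The least integer multiple of the grid width `u` that is at least `x`, for `0 < u`. It rounds
both processing times and starting times; division by zero makes it `0` when `u = 0`. -/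
def roundUp (u x : K) : K :=
  ⌈x / u⌉ * u

variable [IsStrictOrderedRing K] {u x : K}

theorem le_roundUp (hu : 0 < u) : x ≤ roundUp u x :=
  (div_le_iff₀ hu).1 (Int.le_ceil _)

theorem roundUp_lt_add (hu : 0 < u) : roundUp u x < x + u :=
  calc
    roundUp u x < (x / u + 1) * u := mul_lt_mul_of_pos_right (Int.ceil_lt_add_one _) hu
    _ = x + u := by rw [add_mul, div_mul_cancel₀ _ hu.ne', one_mul]

theorem roundUp_le_intCast_mul_iff (hu : 0 < u) {n : ℤ} : roundUp u x ≤ n * u ↔ x ≤ n * u := by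
  rw [roundUp, mul_le_mul_iff_left₀ hu, Int.cast_le, Int.ceil_le, div_le_iff₀ hu]

theorem exists_roundUp_eq_natCast_mul (hu : 0 < u) (hx : 0 ≤ x) :
    ∃ n : ℕ, roundUp u x = n * u :=
  ⟨⌈x / u⌉₊, by rw [roundUp, natCast_ceil_eq_intCast_ceil (div_nonneg hx hu.le)]⟩

theorem exists_roundUp_eq_natCast_mul_of_mem_Icc {a : K} {n : ℕ} (hu : 0 < u) (ha : 0 ≤ a)
    (hx : x ∈ Set.Icc (a * u) (n * u)) :
    ∃ k : ℕ, a ≤ k ∧ k ≤ n ∧ roundUp u x = k * u := by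
  obtain ⟨k, hk⟩ := exists_roundUp_eq_natCast_mul hu ((mul_nonneg ha hu.le).trans hx.1)
  have lower : a * u ≤ k * u := hk ▸ hx.1.trans (le_roundUp hu)
  have upper : (k : K) * u ≤ n * u := by
    have := (roundUp_le_intCast_mul_iff hu (n := n)).2 (by simpa only [Int.cast_natCast] using hx.2)
    rwa [hk, Int.cast_natCast] at this
  exact ⟨k, le_of_mul_le_mul_right lower hu, Nat.cast_le.1 (le_of_mul_le_mul_right upper hu), hk⟩

end RoundUp

section GeometricClasses

variable {K : Type*} [Field K] [LinearOrder K] [IsStrictOrderedRing K] {ε T x : K} {l : ℕ}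

theorem pow_succ_mul_le_mul_of_pow_mul_le (hε : 0 ≤ ε) (hx : ε ^ l * T ≤ x) :
    ε ^ (l + 1) * T ≤ ε * x :=
  calc
    ε ^ (l + 1) * T = ε * (ε ^ l * T) := by rw [pow_succ', mul_assoc]
    _ ≤ ε * x := mul_le_mul_of_nonneg_left hx hε

theorem sq_mul_le_pow_succ_mul_of_le_pow_pred_mul (hl : 1 ≤ l) (hx : x ≤ ε ^ (l - 1) * T) :
    ε ^ 2 * x ≤ ε ^ (l + 1) * T :=
  calc
    ε ^ 2 * x ≤ ε ^ 2 * (ε ^ (l - 1) * T) := mul_le_mul_of_nonneg_left hx (sq_nonneg ε)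
    _ = ε ^ (l + 1) * T := by rw [← mul_assoc, ← pow_add, show 2 + (l - 1) = l + 1 by omega]

theorem mem_Icc_mul_pow_succ_mul (hε : 0 < ε) (hl : 1 ≤ l)
    (hx : ε ^ l * T ≤ x ∧ x ≤ ε ^ (l - 1) * T) :
    x ∈ Set.Icc (1 / ε * (ε ^ (l + 1) * T)) (1 / ε ^ 2 * (ε ^ (l + 1) * T)) := by
  rw [Set.mem_Icc, one_div_mul_eq_div, one_div_mul_eq_div, div_le_iff₀' hε,
    le_div_iff₀' (pow_pos hε 2)]
  exact ⟨pow_succ_mul_le_mul_of_pow_mul_le hε.le hx.1,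
    sq_mul_le_pow_succ_mul_of_le_pow_pred_mul hl hx.2⟩

end GeometricClasses

section Schedules

variable {ι : Type*} {m R : ℕ} {J : Finset ι} {σ σ' p p' u : ι → ℚ} {r : ι → ℕ} {c : ℚ}

theorem Feasible.of_activeSet_subset (hf : Feasible m R J σ p r)
    (hsub : ∀ t, ∃ s, activeSet J σ' p' t ⊆ activeSet J σ p s) : Feasible m R J σ' p' r := by
  intro t
  obtain ⟨s, hs⟩ := hsub t
  exact ⟨(Finset.card_le_card hs).trans (hf s).1, (Finset.sum_le_sum_of_subset hs).trans (hf s).2⟩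

theorem activeSet_subset_activeSet_div (hc : 0 < c) (hstart : ∀ j ∈ J, c * σ j ≤ σ' j)
    (hend : ∀ j ∈ J, σ' j + p' j ≤ c * (σ j + p j)) (t : ℚ) :
    activeSet J σ' p' t ⊆ activeSet J σ p (t / c) := by
  intro j hj
  obtain ⟨hjJ, hstarted, hrunning⟩ := Finset.mem_filter.1 hj
  exact Finset.mem_filter.2 ⟨hjJ, (le_div_iff₀' hc).2 ((hstart j hjJ).trans hstarted),
    (div_lt_iff₀' hc).2 (hrunning.trans_le (hend j hjJ))⟩

/-- The schedule obtained from `σ` by stretching time by the factor `c` and then delaying each job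
`j` to the next multiple of its own grid width `u j`. -/
def stretchToGrid (c : ℚ) (u σ : ι → ℚ) (j : ι) : ℚ :=
  roundUp (u j) (c * σ j)

theorem stretchToGrid_add_le {j : ι} (hu : 0 < u j) (hroom : p' j + u j ≤ c * p j) :
    stretchToGrid c u σ j + p' j ≤ c * (σ j + p j) :=
  calc
    stretchToGrid c u σ j + p' j ≤ c * σ j + u j + p' j := by
      gcongr
      exact (roundUp_lt_add hu).le
    _ = c * σ j + (p' j + u j) := by ring
    _ ≤ c * σ j + c * p j := by gcongr
    _ = c * (σ j + p j) := (mul_add ..).symm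

theorem Feasible.stretchToGrid (hf : Feasible m R J σ p r) (hc : 0 < c)
    (hu : ∀ j ∈ J, 0 < u j) (hroom : ∀ j ∈ J, p' j + u j ≤ c * p j) :
    Feasible m R J (stretchToGrid c u σ) p' r :=
  hf.of_activeSet_subset fun t => ⟨t / c, activeSet_subset_activeSet_div hc
    (fun j hj => le_roundUp (hu j hj))
    (fun j hj => stretchToGrid_add_le (hu j hj) (hroom j hj)) t⟩

end Schedules

/-- rounding of processing times.  Jobs with `ε^{l_j}·T ≤ p(j) < ε^{l_j−1}·T`
are rounded to `p'(j) = ⌈p(j)/(ε^{l_j+1}·T)⌉·ε^{l_j+1}·T`; then each `p'(j)` is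
`k_j·ε^{l_j+1}·T` with `1/ε ≤ k_j ≤ 1/ε²` and `p(j) ≤ p'(j)`, and any feasible schedule
of makespan at most `M` can be transformed into a feasible schedule of the rounded
instance of makespan at most `(1+2ε)·M` in which every job starts at a nonnegative
integer multiple of `ε^{l_j+1}·T`. -/
theorem rounding_processing_times {ι : Type*} (m R : ℕ) (J : Finset ι)
    (p : ι → ℚ) (r : ι → ℕ)
    (hm : 1 ≤ m) (hR : 1 ≤ R)
    (hp : ∀ j ∈ J, 0 < p j) (hr : ∀ j ∈ J, r j ≤ R)
    (ε : ℚ) (hε0 : 0 < ε) (hε1 : ε ≤ 1)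
    (N : ℕ) (hN : 1 ≤ N) (hεN : ε = 1 / (N : ℚ))
    (T : ℚ) (hT : 0 < T) (k : ℕ)
    (l : ι → ℕ) (hl : ∀ j ∈ J, 1 ≤ l j ∧ l j ≤ k)
    (hpl : ∀ j ∈ J, ε ^ (l j) * T ≤ p j ∧ p j < ε ^ (l j - 1) * T)
    (p' : ι → ℚ)
    (hp' : ∀ j ∈ J, p' j = ⌈p j / (ε ^ (l j + 1) * T)⌉ * (ε ^ (l j + 1) * T)) :
    (∀ j ∈ J, ∃ kj : ℕ, (1 / ε : ℚ) ≤ kj ∧ (kj : ℚ) ≤ 1 / ε ^ 2 ∧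
        p' j = kj * (ε ^ (l j + 1) * T) ∧ p j ≤ p' j) ∧
    (∀ (σ : ι → ℚ) (M : ℚ), (∀ j ∈ J, 0 ≤ σ j) → Feasible m R J σ p r →
      (∀ j ∈ J, σ j + p j ≤ M) →
      ∃ σ' : ι → ℚ, (∀ j ∈ J, 0 ≤ σ' j) ∧ Feasible m R J σ' p' r ∧
        (∀ j ∈ J, σ' j + p' j ≤ (1 + 2 * ε) * M) ∧
        (∀ j ∈ J, ∃ a : ℕ, σ' j = a * (ε ^ (l j + 1) * T))) := by
  let u : ι → ℚ := fun j => ε ^ (l j + 1) * T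
  have hu : ∀ j, 0 < u j := fun j => mul_pos (pow_pos hε0 _) hT
  have hround : ∀ j ∈ J, p' j = roundUp (u j) (p j) := hp'
  have hsq : 1 / ε ^ 2 = ((N ^ 2 : ℕ) : ℚ) := by simp [hεN]
  refine ⟨fun j hj => ?_, fun σ M hσ hf hM => ?_⟩
  · have hclass := mem_Icc_mul_pow_succ_mul hε0 (hl j hj).1 ⟨(hpl j hj).1, (hpl j hj).2.le⟩
    obtain ⟨kj, hlower, hupper, hkj⟩ := exists_roundUp_eq_natCast_mul_of_mem_Icc
      (hu j) (one_div_nonneg.2 hε0.le) (hsq ▸ hclass)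
    exact ⟨kj, hlower, hsq ▸ Nat.cast_le.2 hupper, (hround j hj).trans hkj,
      hround j hj ▸ le_roundUp (hu j)⟩
  · have hc : 0 < 1 + 2 * ε := by positivity
    have hroom : ∀ j ∈ J, p' j + u j ≤ (1 + 2 * ε) * p j := fun j hj => by
      have hshort : u j ≤ ε * p j := pow_succ_mul_le_mul_of_pow_mul_le hε0.le (hpl j hj).1
      linarith [hround j hj, roundUp_lt_add (x := p j) (hu j)]
    have hstretched : ∀ j ∈ J, 0 ≤ (1 + 2 * ε) * σ j := fun j hj => mul_nonneg hc.le (hσ j hj)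
    exact ⟨stretchToGrid (1 + 2 * ε) u σ,
      fun j hj => (hstretched j hj).trans (le_roundUp (hu j)),
      hf.stretchToGrid hc (fun j _ => hu j) hroom,
      fun j hj => (stretchToGrid_add_le (hu j) (hroom j hj)).trans
        (mul_le_mul_of_nonneg_left (hM j hj) hc.le),
      fun j hj => exists_roundUp_eq_natCast_mul (hu j) (hstretched j hj)⟩
end

section
/- Let J and S be finite sets, let K ∈ ℕ, and let x : J × S → ℝ be such that x(j,s) ≥ 0 for all (j,s), ∑_{s∈S} x(j,s) = 1 for every j ∈ J, and the number of pairs (j,s) with x(j,s) > 0 is at most |J| + K. Call a job j fractionally scheduled if there exist two distinct s, s' ∈ S with x(j,s) > 0 and x(j,s') > 0. Then the number of fractionally scheduled jobs is at most K. Moreover, if r : J → ℝ satisfies 0 ≤ r(j) ≤ α·R for all j (with α, R ≥ 0), then the sum of r(j) over all fractionally scheduled jobs is at most K·α·R. -/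
open scoped Classical

/-! Count the nonzero components job by job. Every job accounts for at least one of them and every
fractionally scheduled job for at least two, so there are at least `|J|` plus the number of
fractionally scheduled jobs. -/

open Finset

/-- Job `j` is *fractionally scheduled* by the assignment `x`: it uses two different starting points
of `S`. It is reducible so that the decidability of the right-hand side carries over. -/
abbrev IsFractionallyScheduled {ι κ M : Type*} [Zero M] [LT M] (S : Finset κ) (x : ι → κ → M)
    (j : ι) : Prop :=
  ∃ s ∈ S, ∃ s' ∈ S, s ≠ s' ∧ 0 < x j s ∧ 0 < x j s'

theorem isFractionallyScheduled_iff_one_lt_card {ι κ M : Type*} [Zero M] [LT M]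
    [DecidableLT M] {S : Finset κ} {x : ι → κ → M} {j : ι} :
    IsFractionallyScheduled S x j ↔ 1 < #{s ∈ S | 0 < x j s} := by
  simp only [one_lt_card, mem_filter]
  grind

theorem card_filter_product_eq_sum_card_filter {ι κ : Type*} (s : Finset ι) (t : Finset κ)
    (r : ι → κ → Prop) [∀ i k, Decidable (r i k)] :
    #{q ∈ s ×ˢ t | r q.1 q.2} = ∑ i ∈ s, #{k ∈ t | r i k} := by
  simp only [card_filter, sum_product]

theorem card_add_card_filter_one_lt_le_sum {ι : Type*} {s : Finset ι} {f : ι → ℕ}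
    (hf : ∀ i ∈ s, 1 ≤ f i) : #s + #{i ∈ s | 1 < f i} ≤ ∑ i ∈ s, f i := by
  rw [card_eq_sum_ones, card_filter, ← sum_add_distrib]
  refine sum_le_sum fun i hi => ?_
  have := hf i hi
  split_ifs <;> omega

theorem card_add_card_isFractionallyScheduled_le {ι κ M : Type*} [Zero M] [LT M] [DecidableLT M]
    {J : Finset ι} {S : Finset κ} {x : ι → κ → M}
    [DecidablePred (IsFractionallyScheduled S x)] (hx : ∀ j ∈ J, ∃ s ∈ S, 0 < x j s) :
    #J + #{j ∈ J | IsFractionallyScheduled S x j} ≤ #{q ∈ J ×ˢ S | 0 < x q.1 q.2} := by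
  have one_le : ∀ j ∈ J, 1 ≤ #{s ∈ S | 0 < x j s} := fun j hj =>
    card_pos.2 (filter_nonempty_iff.2 (hx j hj))
  calc #J + #{j ∈ J | IsFractionallyScheduled S x j}
      = #J + #{j ∈ J | 1 < #{s ∈ S | 0 < x j s}} := by
        simp only [isFractionallyScheduled_iff_one_lt_card]
    _ ≤ ∑ j ∈ J, #{s ∈ S | 0 < x j s} := card_add_card_filter_one_lt_le_sum one_le
    _ = #{q ∈ J ×ˢ S | 0 < x q.1 q.2} :=
        (card_filter_product_eq_sum_card_filter J S fun j s => 0 < x j s).symm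

theorem sum_le_nsmul_of_card_le {ι N : Type*} [AddCommMonoid N] [PartialOrder N]
    [IsOrderedAddMonoid N] {s : Finset ι} {f : ι → N} {n : ℕ} {c : N} (hs : #s ≤ n) (hc : 0 ≤ c)
    (hf : ∀ i ∈ s, f i ≤ c) : ∑ i ∈ s, f i ≤ n • c :=
  (sum_le_card_nsmul s f c hf).trans (nsmul_le_nsmul_left hc hs)

theorem fractional_jobs_count_general {ι κ M N : Type*}
    [AddCommMonoid M] [LinearOrder M] [IsOrderedAddMonoid M]
    [AddCommMonoid N] [PartialOrder N] [IsOrderedAddMonoid N]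
    (J : Finset ι) (S : Finset κ) (K : ℕ) (x : ι → κ → M)
    [DecidablePred (IsFractionallyScheduled S x)]
    (hx : ∀ j ∈ J, 0 < ∑ s ∈ S, x j s)
    (hnz : #{q ∈ J ×ˢ S | 0 < x q.1 q.2} ≤ #J + K) :
    #{j ∈ J | IsFractionallyScheduled S x j} ≤ K ∧
    ∀ (r : ι → N) (c : N), 0 ≤ c → (∀ j ∈ J, r j ≤ c) →
      ∑ j ∈ J with IsFractionallyScheduled S x j, r j ≤ K • c := by
  have uses_component : ∀ j ∈ J, ∃ s ∈ S, 0 < x j s := fun j hj =>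
    exists_lt_of_sum_lt (by simpa only [sum_const_zero] using hx j hj)
  have card_le : #{j ∈ J | IsFractionallyScheduled S x j} ≤ K :=
    Nat.le_of_add_le_add_left ((card_add_card_isFractionallyScheduled_le uses_component).trans hnz)
  exact ⟨card_le, fun r c hc hr =>
    sum_le_nsmul_of_card_le card_le hc fun j hj => hr j (mem_of_mem_filter j hj)⟩

/-- the counting argument for basic solutions of `LP_large`.
If an assignment `x` schedules every job fully (`∑_s x(j,s) = 1`) using at most
`|J| + K` non-zero components, then at most `K` jobs are scheduled fractionally,
and if each resource requirement is at most `α·R` the fractionally scheduled jobs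
use at most `K·α·R` resources in total. -/
theorem fractional_jobs_count {ι κ : Type*} (J : Finset ι) (S : Finset κ)
    (K : ℕ) (x : ι → κ → ℝ)
    (hx0 : ∀ j ∈ J, ∀ s ∈ S, 0 ≤ x j s)
    (hx1 : ∀ j ∈ J, ∑ s ∈ S, x j s = 1)
    (hnz : ((J ×ˢ S).filter (fun q => 0 < x q.1 q.2)).card ≤ J.card + K) :
    (J.filter (fun j => ∃ s ∈ S, ∃ s' ∈ S, s ≠ s' ∧ 0 < x j s ∧ 0 < x j s')).card ≤ K ∧
    ∀ (r : ι → ℝ) (α R : ℝ), 0 ≤ α → 0 ≤ R → (∀ j ∈ J, 0 ≤ r j ∧ r j ≤ α * R) →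
      ∑ j ∈ J.filter (fun j => ∃ s ∈ S, ∃ s' ∈ S, s ≠ s' ∧ 0 < x j s ∧ 0 < x j s'), r j
        ≤ K * α * R := by
  have count := fractional_jobs_count_general (N := ℝ) J S K x
    (fun j hj => zero_lt_one.trans_eq (hx1 j hj).symm) hnz
  exact ⟨count.1, fun r α R hα hR hr => by
    simpa only [nsmul_eq_mul, mul_assoc] using
      count.2 r (α * R) (mul_nonneg hα hR) fun j hj => (hr j hj).2⟩
end
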